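/- arXiv:2011.11029 — 4 statements merged into one kernel-verified Lean document; each statement's English description precedes it below -/
import Mathlib

section
/- Let S = (X, U, ⇝) be a discrete-time control system with cost function c. If V is a Bellman-like value function of S with cost function c, then the Q-function Q_{c,V} is a Bellman-like Q-function of S with cost function c; that is, Q_{c,V}(x, (u_1, …, u_k)) ≤ Q_{c,V}(x, (u_1, …, u_l)) for all k ≤ l, all x ∈ X and all input tuples (u_1, …, u_l) ∈ U^l. -/
/-!
The proof is by induction on the input tuple. Prepending an input `u` to tuples preserves
inequalities between Q-values that hold at every state, since suprema and the addition of
`c x u` are monotone. This handles nonempty prefixes; for the empty prefix, the Bellman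
inequality gives `V x ≤ Q_{c,V}(x, (u))`, and the right-hand side is a nonempty prefix.
-/

/-- The Q-function `Q_{c,V}` of a discrete-time control system `(X, U, ⇝)` with
transition relation `tr`, cost function `c` and terminal value function `V`. -/
noncomputable def QcV {X U : Type*} (tr : X → U → X → Prop) (c : X → U → ℝ)
    (V : X → EReal) : X → List U → EReal
  | x, [] => V x
  | x, u :: us => (c x u : EReal) + ⨆ x' ∈ {y | tr x u y}, QcV tr c V x' us

/-- The Bellman operator `T_c V (x) = inf_{u ∈ U} Q_{c,V}(x, u)`. -/
noncomputable def bellman {X U : Type*} (tr : X → U → X → Prop) (c : X → U → ℝ)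
    (V : X → EReal) : X → EReal :=
  fun x => ⨅ u : U, QcV tr c V x [u]

/-- `V` is a Bellman-like value function: `V x ≤ T_c V x` for all `x`. -/
def IsBellmanLike {X U : Type*} (tr : X → U → X → Prop) (c : X → U → ℝ)
    (V : X → EReal) : Prop :=
  ∀ x, V x ≤ bellman tr c V x

/-- If `V` is a Bellman-like value function of `S` with cost `c`, then `Q_{c,V}` is a
Bellman-like Q-function of `S` with cost `c`: for all `k ≤ l`, all states `x` and all
input tuples `(u₁, …, u_l)`, `Q_{c,V}(x, (u₁, …, u_k)) ≤ Q_{c,V}(x, (u₁, …, u_l))`. -/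
theorem QcV_isBellmanLikeQ {X U : Type*} (tr : X → U → X → Prop) (c : X → U → ℝ)
    (V : X → EReal) (hV : IsBellmanLike tr c V) :
    ∀ (x : X) (us : List U) (k : ℕ), k ≤ us.length →
      QcV tr c V x (us.take k) ≤ QcV tr c V x us := by
  intro x us
  induction us generalizing x with
  | nil => intro k _; simp
  | cons u us ih =>
    -- `Q_{c,V}(x, u :: ·)` depends monotonically on the successor values.
    have hmono : ∀ vs : List U, (∀ x', QcV tr c V x' vs ≤ QcV tr c V x' us) →
        QcV tr c V x (u :: vs) ≤ QcV tr c V x (u :: us) := by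
      intro vs h
      simp only [QcV]
      exact add_le_add le_rfl (iSup₂_mono fun x' _ => h x')
    intro k hk
    cases k with
    | zero =>
      -- The Bellman inequality bounds `V x` by `Q_{c,V}(x, (u))`; the empty prefix of `us` then extends to `us`.
      have h₁ : V x ≤ QcV tr c V x [u] := (hV x).trans (iInf_le _ u)
      have h₂ := hmono [] fun x' => ih x' 0 (Nat.zero_le _)
      simpa only [List.take_zero, QcV] using h₁.trans h₂
    | succ k =>
      exact hmono (us.take k) fun x' => ih x' k (Nat.le_of_succ_le_succ hk)
end

section
/- Let S_1 = (X_1, U_1, ⇝_1) and S_2 = (X_2, U_2, ⇝_2) be discrete-time control systems and let R ⊆ X_1 × X_2 be an alternating simulation relation such that for each x_1 ∈ X_1 there is exactly one x_2 ∈ X_2 with (x_1, x_2) ∈ R, denoted R(x_1). Let c_1 be a cost function for S_1 and let c_2 be a cost function for S_2 satisfying c_2(x_2, u_2) ≤ c_1(x_1, u_1) for all (x_1, x_2, u_1, u_2) in the extended relation R^e. If V_2 is a Bellman-like value function for S_2 with cost function c_2, then V_1 defined by V_1(x_1) = V_2(R(x_1)) is a Bellman-like value function for S_1 with cost function c_1.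 -/
/-- The extended relation `R^e`: `(x₁, x₂, u₁, u₂) ∈ R^e` iff for every
`x₂' ∈ Post_{2,u₂}(x₂)` there exists `x₁' ∈ Post_{1,u₁}(x₁)` with `(x₁', x₂') ∈ R`. -/
def ExtRel {X₁ U₁ X₂ U₂ : Type*} (tr₁ : X₁ → U₁ → X₁ → Prop) (tr₂ : X₂ → U₂ → X₂ → Prop)
    (R : X₁ → X₂ → Prop) (x₁ : X₁) (x₂ : X₂) (u₁ : U₁) (u₂ : U₂) : Prop :=
  ∀ x₂', tr₂ x₂ u₂ x₂' → ∃ x₁', tr₁ x₁ u₁ x₁' ∧ R x₁' x₂'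

/-- `R` is an alternating simulation relation: for all `(x₁, x₂) ∈ R` and all `u₁`
there exists `u₂` with `(x₁, x₂, u₁, u₂) ∈ R^e`. -/
def IsAltSim {X₁ U₁ X₂ U₂ : Type*} (tr₁ : X₁ → U₁ → X₁ → Prop) (tr₂ : X₂ → U₂ → X₂ → Prop)
    (R : X₁ → X₂ → Prop) : Prop :=
  ∀ x₁ x₂, R x₁ x₂ → ∀ u₁ : U₁, ∃ u₂ : U₂, ExtRel tr₁ tr₂ R x₁ x₂ u₁ u₂

/-- If `R` is an alternating simulation relation relating each `x₁` to exactly one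
`x₂ = f x₁`, the costs satisfy `c₂(x₂, u₂) ≤ c₁(x₁, u₁)` on `R^e`, and `V₂` is a
Bellman-like value function for `S₂` with cost `c₂`, then `V₁ = V₂ ∘ f` is a Bellman-like
value function for `S₁` with cost `c₁`. -/
theorem bellmanLike_of_altSim {X₁ U₁ X₂ U₂ : Type*}
    (tr₁ : X₁ → U₁ → X₁ → Prop) (tr₂ : X₂ → U₂ → X₂ → Prop)
    (c₁ : X₁ → U₁ → ℝ) (c₂ : X₂ → U₂ → ℝ)
    (R : X₁ → X₂ → Prop) (f : X₁ → X₂)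
    (hAlt : IsAltSim tr₁ tr₂ R)
    (hfun : ∀ x₁ x₂, R x₁ x₂ ↔ x₂ = f x₁)
    (hcost : ∀ x₁ x₂ u₁ u₂, ExtRel tr₁ tr₂ R x₁ x₂ u₁ u₂ → c₂ x₂ u₂ ≤ c₁ x₁ u₁)
    (V₂ : X₂ → EReal) (hV₂ : IsBellmanLike tr₂ c₂ V₂) :
    IsBellmanLike tr₁ c₁ (fun x₁ => V₂ (f x₁)) := by
  intro x₁
  refine le_iInf fun u₁ => ?_
  obtain ⟨u₂, hu⟩ := hAlt x₁ (f x₁) ((hfun _ _).2 rfl) u₁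
  refine (hV₂ (f x₁)).trans ((iInf_le _ u₂).trans ?_)
  simp only [QcV]
  -- The stage costs are ordered on `R^e`, and every successor of `f x₁` under `u₂` is the image
  -- under `f` of a successor of `x₁` under `u₁`, so the supremum for the first system dominates.
  refine add_le_add (EReal.coe_le_coe_iff.2 (hcost _ _ _ _ hu)) (iSup₂_le fun x₂' hx₂' => ?_)
  obtain ⟨x₁', htr, hR⟩ := hu x₂' hx₂'
  obtain rfl := (hfun _ _).1 hR
  exact le_iSup₂ (f := fun y (_ : y ∈ {y | tr₁ x₁ u₁ y}) => V₂ (f y)) x₁' htr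
end

section
/- Let S_1 = (X_1, U_1, ⇝_1) and S_2 = (X_2, U_2, ⇝_2) be discrete-time control systems and let R ⊆ X_1 × X_2 be an alternating simulation relation such that for each x_2 ∈ X_2 there is exactly one x_1 ∈ X_1 with (x_1, x_2) ∈ R, denoted R(x_2). Let c_2 be a cost function for S_2 and let c_1 be a cost function for S_1 satisfying c_1(x_1, u_1) ≥ c_2(x_2, u_2) for all (x_1, x_2, u_1, u_2) in the extended relation R^e. If L_1 is a Lyapunov function for S_1 with cost function c_1 in a set X_f ⊆ X_1, then L_2 defined by L_2(x_2) = L_1(R(x_2)) is a Lyapunov function for S_2 with cost function c_2 in the set {x_2 ∈ X_2 : R(x_2) ∈ X_f}. -/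
/-- `L` is a Lyapunov function with cost `c` for the system in `X_f`:
`L x = ∞` outside `X_f`, and `L x` is finite with `T_c L x ≤ L x` on `X_f`. -/
def IsLyapunov {X U : Type*} (tr : X → U → X → Prop) (c : X → U → ℝ)
    (Xf : Set X) (L : X → EReal) : Prop :=
  (∀ x ∉ Xf, L x = ⊤) ∧
    ∀ x ∈ Xf, (L x ≠ ⊤ ∧ L x ≠ ⊥) ∧ bellman tr c L x ≤ L x

/-- If `R` is an alternating simulation relation relating each `x₂` to exactly one
`x₁ = g x₂`, the costs satisfy `c₁(x₁, u₁) ≥ c₂(x₂, u₂)` on `R^e`, and `L₁` is a Lyapunov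
function for `S₁` with cost `c₁` in `X_f`, then `L₂ = L₁ ∘ g` is a Lyapunov function for
`S₂` with cost `c₂` in `{x₂ | g x₂ ∈ X_f}`. -/
theorem lyapunov_of_altSim {X₁ U₁ X₂ U₂ : Type*}
    (tr₁ : X₁ → U₁ → X₁ → Prop) (tr₂ : X₂ → U₂ → X₂ → Prop)
    (c₁ : X₁ → U₁ → ℝ) (c₂ : X₂ → U₂ → ℝ)
    (R : X₁ → X₂ → Prop) (g : X₂ → X₁)
    (hAlt : IsAltSim tr₁ tr₂ R)
    (hfun : ∀ x₁ x₂, R x₁ x₂ ↔ x₁ = g x₂)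
    (hcost : ∀ x₁ x₂ u₁ u₂, ExtRel tr₁ tr₂ R x₁ x₂ u₁ u₂ → c₂ x₂ u₂ ≤ c₁ x₁ u₁)
    (Xf : Set X₁) (L₁ : X₁ → EReal) (hL₁ : IsLyapunov tr₁ c₁ Xf L₁) :
    IsLyapunov tr₂ c₂ {x₂ | g x₂ ∈ Xf} (fun x₂ => L₁ (g x₂)) := by
  refine ⟨fun x₂ hx => hL₁.1 _ hx, fun x₂ hx => ⟨(hL₁.2 _ hx).1, ?_⟩⟩
  refine le_trans (le_iInf fun u₁ => ?_) (hL₁.2 _ hx).2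
  -- The input `u₂` answering `u₁` has a worst case bounded by that of `u₁` at `g x₂`.
  obtain ⟨u₂, hu₂⟩ := hAlt (g x₂) x₂ ((hfun _ _).2 rfl) u₁
  refine (iInf_le _ u₂).trans ?_
  simp only [QcV]
  refine add_le_add (EReal.coe_le_coe_iff.2 (hcost _ _ _ _ hu₂)) (iSup₂_le fun x₂' h₂ => ?_)
  obtain ⟨x₁', h₁, hR⟩ := hu₂ x₂' h₂
  obtain rfl := (hfun _ _).1 hR
  exact le_iSup₂ (f := fun x' (_ : x' ∈ {y | tr₁ (g x₂) u₁ y}) => L₁ x') (g x₂') h₁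
end

section
/- Let S = (Q × X, V × U, ⇝) be a deterministic discrete-time control hybrid system with cost function c, and let Q be a Bellman-like Q-function of S with cost c, defined on input tuples of length k and extended to longer tuples by the recursion Q(s, (w_1, …, w_m)) = c(s, w_1) + max_{s' ∈ Post_{w_1}(s)} Q(s', (w_2, …, w_m)). Let Q' be a Q-function on input tuples of length k, extended by the same recursion, such that Q'(s, (w_1, …, w_k)) ≤ T_c Q(s, (w_1, …, w_k)) for all states s and all length-k input tuples, where T_c Q(s, (w_1, …, w_k)) = inf_{w' ∈ V × U} Q(s, (w_1, …, w_k, w')). Then the pointwise maximum max(Q, Q') is a Bellman-like Q-function of S with cost c. -/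
/-!
Since `⨆` and addition of a real constant are monotone, the extension `extQ` is monotone in its
base function (`extQ_mono`). Write `M` for the extension of `max Qb Qb'`.

Peeling off common leading inputs with the recursion reduces `M s (ws.take j) ≤ M s ws` to the
case `j = k < ws.length`. There `M s (ws.take k)` is the maximum of `Qb` and `Qb'` at `ws.take k`,
and both are at most the extension of `Qb` at `ws.take (k + 1)`: the first because `Q` is
Bellman-like, the second by the hypothesis on `Q'`. As `Q` is Bellman-like, this is at most the
extension of `Qb` at `ws`, hence at most `M s ws` by monotonicity.
-/

/-- A deterministic system: `Post_w(s)` is empty or a singleton. -/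
def IsDeterministic {X U : Type*} (tr : X → U → X → Prop) : Prop :=
  ∀ x u y y', tr x u y → tr x u y' → y = y'

/-- Extension of a Q-function `Qb`, defined on input tuples of length `k`, to longer
tuples via the recursion
`Q(s, (w₁, …, w_m)) = c(s, w₁) + sup_{s' ∈ Post_{w₁}(s)} Q(s', (w₂, …, w_m))`. -/
noncomputable def extQ {X U : Type*} (tr : X → U → X → Prop) (c : X → U → ℝ) (k : ℕ)
    (Qb : X → List U → EReal) : X → List U → EReal
  | s, [] => Qb s []
  | s, w :: ws =>
    if (w :: ws).length ≤ k then Qb s (w :: ws)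
    else (c s w : EReal) + ⨆ s' ∈ {y | tr s w y}, extQ tr c k Qb s' ws

theorem extQ_of_length_le {X U : Type*} (tr : X → U → X → Prop) (c : X → U → ℝ) (k : ℕ)
    (Qb : X → List U → EReal) (s : X) (ws : List U) (h : ws.length ≤ k) :
    extQ tr c k Qb s ws = Qb s ws := by
  cases ws with
  | nil => rw [extQ]
  | cons w ws => rw [extQ, if_pos h]

theorem extQ_cons_of_lt {X U : Type*} (tr : X → U → X → Prop) (c : X → U → ℝ) (k : ℕ)
    (Qb : X → List U → EReal) (s : X) (w : U) (ws : List U) (h : k < (w :: ws).length) :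
    extQ tr c k Qb s (w :: ws) =
      (c s w : EReal) + ⨆ s' ∈ {y | tr s w y}, extQ tr c k Qb s' ws := by
  rw [extQ, if_neg (not_le.mpr h)]

theorem extQ_mono {X U : Type*} (tr : X → U → X → Prop) (c : X → U → ℝ) (k : ℕ)
    {Qb Qb' : X → List U → EReal} (h : ∀ s ws, Qb s ws ≤ Qb' s ws) (s : X) (ws : List U) :
    extQ tr c k Qb s ws ≤ extQ tr c k Qb' s ws := by
  induction ws generalizing s with
  | nil => simpa only [extQ] using h s []
  | cons w ws ih =>
    rcases le_or_gt (w :: ws).length k with hl | hl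
    · rw [extQ_of_length_le _ _ _ _ _ _ hl, extQ_of_length_le _ _ _ _ _ _ hl]
      exact h _ _
    · rw [extQ_cons_of_lt _ _ _ _ _ _ _ hl, extQ_cons_of_lt _ _ _ _ _ _ _ hl]
      exact add_le_add le_rfl (iSup₂_mono fun s' _ => ih s')

/-- For a deterministic discrete-time control hybrid system, if `Q` (given by a base
function `Qb` on length-`k` tuples, extended by the recursion) is a Bellman-like
Q-function with cost `c`, and `Q'(s, (w₁,…,w_k)) ≤ T_c Q(s, (w₁,…,w_k)) =
inf_{w'} Q(s, (w₁,…,w_k,w'))` for all states and length-`k` tuples, then the pointwise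
maximum `max(Q, Q')` is a Bellman-like Q-function of the system with cost `c`. -/
theorem max_Q_isBellmanLike {Qd X Vd U : Type*} [Finite Qd] [Finite Vd]
    (tr : (Qd × X) → (Vd × U) → (Qd × X) → Prop) (hdet : IsDeterministic tr)
    (c : (Qd × X) → (Vd × U) → ℝ) (k : ℕ)
    (Qb Qb' : (Qd × X) → List (Vd × U) → EReal)
    (hQ : ∀ (s : Qd × X) (ws : List (Vd × U)) (j : ℕ), k ≤ j → j ≤ ws.length →
      extQ tr c k Qb s (ws.take j) ≤ extQ tr c k Qb s ws)
    (hQ' : ∀ (s : Qd × X) (ws : List (Vd × U)), ws.length = k →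
      Qb' s ws ≤ ⨅ w' : Vd × U, extQ tr c k Qb s (ws ++ [w'])) :
    ∀ (s : Qd × X) (ws : List (Vd × U)) (j : ℕ), k ≤ j → j ≤ ws.length →
      extQ tr c k (fun s ws => max (Qb s ws) (Qb' s ws)) s (ws.take j) ≤
        extQ tr c k (fun s ws => max (Qb s ws) (Qb' s ws)) s ws := by
  intro s ws
  -- The case where the shorter tuple has the base length.
  have base : ∀ (s : Qd × X) (ws : List (Vd × U)), k < ws.length →
      extQ tr c k (fun s ws => max (Qb s ws) (Qb' s ws)) s (ws.take k) ≤
        extQ tr c k (fun s ws => max (Qb s ws) (Qb' s ws)) s ws := by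
    intro s ws hk
    have hlen : (ws.take k).length = k := by
      rw [List.length_take]; omega
    refine le_trans ?_ (extQ_mono tr c k (fun s ws => le_max_left (Qb s ws) (Qb' s ws)) s ws)
    rw [extQ_of_length_le _ _ _ _ _ _ hlen.le]
    refine max_le ?_ ?_
    · rw [← extQ_of_length_le tr c k Qb s _ hlen.le]
      exact hQ s ws k le_rfl hk.le
    · refine ((hQ' s _ hlen).trans (iInf_le _ ws[k])).trans ?_
      rw [List.take_append_getElem hk]
      exact hQ s ws (k + 1) (Nat.le_succ k) hk
  induction ws generalizing s with
  | nil =>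
    intro j _ _
    rw [List.take_nil]
  | cons w ws ih =>
    intro j hkj hj
    rcases hj.eq_or_lt with rfl | hlt
    · rw [List.take_length]
    rcases hkj.eq_or_lt with rfl | hkj'
    · exact base s (w :: ws) hlt
    obtain ⟨i, rfl⟩ : ∃ i, j = i + 1 := ⟨j - 1, by omega⟩
    rw [List.length_cons] at hlt
    rw [List.take_succ_cons,
      extQ_cons_of_lt _ _ _ _ _ _ _ (by rw [List.length_cons, List.length_take]; omega),
      extQ_cons_of_lt _ _ _ _ _ _ _ (by rw [List.length_cons]; omega)]
    exact add_le_add le_rfl (iSup₂_mono fun s' _ => ih s' i (by omega) (by omega))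
end
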